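/- Let β ∈ (1,√3] ∪ (2,√5] with β ∉ ℤ, let A = {0,1,…,⌊β⌋}, and write {β} = β − ⌊β⌋. Then no x in the open interval I = (−1/(2β), −{β}/(2β²)) has an optimal (−β,A)-representation. -/

import Mathlib

/-- A `(γ, B)`-representation of `x`: a sequence of digits `b i ∈ B` (here `b i` is the
digit `b_{i+1}` of the paper, i.e. sequences are 0-indexed) with `x = ∑_{i ≥ 1} b_i / γ^i`. -/
def IsRep (γ : ℝ) (B : Set ℝ) (b : ℕ → ℝ) (x : ℝ) : Prop :=
  (∀ i, b i ∈ B) ∧ HasSum (fun i : ℕ => b i / γ ^ (i + 1)) x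

/-- `J_{γ,B}`: the set of real numbers admitting a `(γ,B)`-representation. -/
def RepSet (γ : ℝ) (B : Set ℝ) : Set ℝ := {x | ∃ b, IsRep γ B b x}

/-- A `(γ,B)`-representation `c` of `x` is optimal if its partial sums approximate `x`
at least as well as those of any other `(γ,B)`-representation of `x`. -/
def IsOptimalRep (γ : ℝ) (B : Set ℝ) (c : ℕ → ℝ) (x : ℝ) : Prop :=
  IsRep γ B c x ∧ ∀ b : ℕ → ℝ, IsRep γ B b x → ∀ n : ℕ, 1 ≤ n →
    |x - ∑ i ∈ Finset.range n, c i / γ ^ (i + 1)| ≤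
      |x - ∑ i ∈ Finset.range n, b i / γ ^ (i + 1)|

/-- The digit alphabet `{0, 1, …, M}` as a set of reals. -/
def digitSet (M : ℤ) : Set ℝ := (fun k : ℤ => (k : ℝ)) '' Set.Icc 0 M

/-!
Multiplying the error after `n` digits by `γ ^ n` turns optimality into a comparison of the
remainders `x ↦ γ x - d`, and a prefix extends to a representation exactly when its remainder is
representable. For `γ = -β` and `β² ≤ 2 M + 1` the interval `[-β / 2, 1 / 2]` consists of
representable numbers, because a digit in `{0, …, M}` always brings `-β r` back into it. For
`y = -β x` in `({β} / (2 β), 1 / 2)` the digit `0` is the only best first digit, so after two digits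
an optimal representation has rescaled error at least `β y`. The prefix `1, M` with `M = ⌊β⌋` has
the smaller rescaled error `|{β} - β y|`.
-/

/-- The remainder of `x` after expanding it in base `γ` along the digits `d`, rescaled by `γ ^ n`:
the orbit of `x` under the maps `r ↦ γ r - d n`. It measures the error of the first `n` digits
without denominators. -/
def digitRemainder (γ : ℝ) (d : ℕ → ℝ) (x : ℝ) : ℕ → ℝ
  | 0 => x
  | n + 1 => γ * digitRemainder γ d x n - d n

section Representations

variable {γ x : ℝ} {B : Set ℝ} {c d : ℕ → ℝ}

theorem sub_sum_range_eq_digitRemainder_div (hγ : γ ≠ 0) (d : ℕ → ℝ) (x : ℝ) (n : ℕ) :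
    x - ∑ i ∈ Finset.range n, d i / γ ^ (i + 1) = digitRemainder γ d x n / γ ^ n := by
  induction n with
  | zero => simp [digitRemainder]
  | succ n ih =>
    rw [Finset.sum_range_succ, ← sub_sub, ih, digitRemainder]
    field_simp
    ring

theorem digitRemainder_congr {n : ℕ} (h : ∀ i < n, c i = d i) :
    digitRemainder γ c x n = digitRemainder γ d x n := by
  induction n with
  | zero => rfl
  | succ n ih =>
    rw [digitRemainder, digitRemainder, ih fun i hi ↦ h i (hi.trans n.lt_succ_self),
      h n n.lt_succ_self]

theorem hasSum_of_abs_digitRemainder_le {C : ℝ} (hγ : 1 < |γ|)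
    (hC : ∀ n, |digitRemainder γ d x n| ≤ C) : HasSum (fun i ↦ d i / γ ^ (i + 1)) x := by
  have hγ₀ : γ ≠ 0 := abs_pos.1 (one_pos.trans hγ)
  let f : ℕ → ℝ := fun n ↦ digitRemainder γ d x n / γ ^ n
  have hf : Summable f := by
    refine Summable.of_norm_bounded ((summable_geometric_of_lt_one (inv_nonneg.2 (abs_nonneg γ))
      (inv_lt_one_of_one_lt₀ hγ)).mul_left C) fun n ↦ ?_
    rw [Real.norm_eq_abs, abs_div, abs_pow, div_eq_mul_inv, ← inv_pow]
    exact mul_le_mul_of_nonneg_right (hC n) (by positivity)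
  have htelescope (i : ℕ) : f i - f (i + 1) = d i / γ ^ (i + 1) := by
    simp only [f, digitRemainder]
    field_simp
    ring
  have hf₀ : f 0 = x := by simp [f, digitRemainder]
  simpa only [htelescope, Finset.sum_range_one, sub_sub_cancel, hf₀] using
    hf.hasSum.sub ((hasSum_nat_add_iff' 1).2 hf.hasSum)

theorem subset_repSet_of_forall_exists_mul_sub_mem {K : Set ℝ} (hγ : 1 < |γ|)
    (hK : Bornology.IsBounded K) (hstep : ∀ w ∈ K, ∃ d ∈ B, γ * w - d ∈ K) :
    K ⊆ RepSet γ B := by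
  intro x hx
  choose! δ hδB hδK using hstep
  let s : ℕ → ℝ := fun n ↦ (fun w ↦ γ * w - δ w)^[n] x
  have hs_succ (n : ℕ) : s (n + 1) = γ * s n - δ (s n) := Function.iterate_succ_apply' _ _ _
  have hsK (n : ℕ) : s n ∈ K := by
    induction n with
    | zero => exact hx
    | succ n ih => exact hs_succ n ▸ hδK _ ih
  have hrem (n : ℕ) : digitRemainder γ (fun i ↦ δ (s i)) x n = s n := by
    induction n with
    | zero => rfl
    | succ n ih => rw [digitRemainder, ih, hs_succ]
  obtain ⟨C, hC⟩ := isBounded_iff_forall_norm_le.1 hK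
  exact ⟨fun i ↦ δ (s i), fun i ↦ hδB _ (hsK i),
    hasSum_of_abs_digitRemainder_le hγ fun n ↦ (hrem n).symm ▸ hC _ (hsK n)⟩

theorem exists_isRep_of_digitRemainder_mem_repSet {n : ℕ} (hγ : γ ≠ 0) (hd : ∀ i < n, d i ∈ B)
    (hn : digitRemainder γ d x n ∈ RepSet γ B) : ∃ b, IsRep γ B b x ∧ ∀ i < n, b i = d i := by
  obtain ⟨e, heB, he⟩ := hn
  let b : ℕ → ℝ := fun i ↦ if i < n then d i else e (i - n)
  have hb_lt (i : ℕ) (hi : i < n) : b i = d i := if_pos hi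
  have hb_add (i : ℕ) : b (i + n) = e i := by simp [b]
  refine ⟨b, ⟨fun i ↦ ?_, ?_⟩, hb_lt⟩
  · rcases lt_or_ge i n with hi | hi
    · exact hb_lt i hi ▸ hd i hi
    · obtain ⟨j, rfl⟩ := Nat.exists_eq_add_of_le' hi
      exact hb_add j ▸ heB j
  · have hshift (i : ℕ) : e i / γ ^ (i + 1) / γ ^ n = b (i + n) / γ ^ (i + n + 1) := by
      rw [hb_add, div_div, ← pow_add, add_right_comm]
    rw [← hasSum_nat_add_iff' n, sub_sum_range_eq_digitRemainder_div hγ,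
      digitRemainder_congr hb_lt]
    simpa only [hshift] using he.div_const (γ ^ n)

theorem IsOptimalRep.abs_digitRemainder_le {n : ℕ} (hc : IsOptimalRep γ B c x) (hγ : γ ≠ 0)
    (hd : ∀ i < n, d i ∈ B) (hn : digitRemainder γ d x n ∈ RepSet γ B) :
    |digitRemainder γ c x n| ≤ |digitRemainder γ d x n| := by
  obtain rfl | hn_pos := n.eq_zero_or_pos
  · rfl
  obtain ⟨b, hb, hbd⟩ := exists_isRep_of_digitRemainder_mem_repSet hγ hd hn
  have hle := hc.2 b hb n hn_pos
  rwa [sub_sum_range_eq_digitRemainder_div hγ, sub_sum_range_eq_digitRemainder_div hγ,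
    digitRemainder_congr hbd, abs_div, abs_div,
    div_le_div_iff_of_pos_right (by positivity)] at hle

end Representations

section IntegerDigits

variable {M : ℤ}

theorem intCast_mem_digitSet {k : ℤ} (hk₀ : 0 ≤ k) (hkM : k ≤ M) : (k : ℝ) ∈ digitSet M :=
  ⟨k, ⟨hk₀, hkM⟩, rfl⟩

theorem exists_mem_digitSet_sub_mem_Icc {a b y : ℝ} (hM : 0 ≤ M) (hab : 1 ≤ b - a)
    (hy : y ∈ Set.Icc a (b + M)) : ∃ d ∈ digitSet M, y - d ∈ Set.Icc a b := by
  rcases le_total y b with hyb | hby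
  · exact ⟨(0 : ℤ), intCast_mem_digitSet le_rfl hM, by simpa using ⟨hy.1, hyb⟩⟩
  · refine ⟨⌈y - b⌉, intCast_mem_digitSet (Int.ceil_nonneg (sub_nonneg.2 hby))
      (Int.ceil_le.2 (by linarith [hy.2])), ?_, ?_⟩
    · linarith [Int.ceil_lt_add_one (y - b)]
    · linarith [Int.le_ceil (y - b)]

theorem Icc_neg_mul_subset_repSet {β r : ℝ} (hβ : 1 < β) (hr : 1 ≤ β * r + r)
    (hM : β ^ 2 * r ≤ r + M) : Set.Icc (-(β * r)) r ⊆ RepSet (-β) (digitSet M) := by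
  have hβ₀ : 0 < β := one_pos.trans hβ
  have hr₀ : 0 < r := pos_of_mul_pos_right (a := β + 1) (by linarith) (by linarith)
  have hM₀ : 0 ≤ M := by
    have hsq : r ≤ β ^ 2 * r := le_mul_of_one_le_left hr₀.le (one_le_pow₀ hβ.le)
    have : (0 : ℝ) ≤ M := by linarith
    exact_mod_cast this
  refine subset_repSet_of_forall_exists_mul_sub_mem (by rwa [abs_neg, abs_of_pos hβ₀])
    (Metric.isBounded_Icc _ _) fun w hw ↦ ?_
  refine exists_mem_digitSet_sub_mem_Icc hM₀ (by linarith) ⟨?_, ?_⟩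
  · linarith [mul_le_mul_of_nonneg_left hw.2 hβ₀.le]
  · linarith [mul_le_mul_of_nonneg_left hw.1 hβ₀.le]

theorem IsOptimalRep.first_digit_eq_zero {γ x : ℝ} {c : ℕ → ℝ}
    (hc : IsOptimalRep γ (digitSet M) c x) (hγ : γ ≠ 0) (hrep : γ * x ∈ RepSet γ (digitSet M))
    (hx : |γ * x| < 1 / 2) : c 0 = 0 := by
  obtain ⟨k, ⟨hk₀, hkM⟩, (hk : (k : ℝ) = c 0)⟩ := hc.1.1 0
  have hle : |γ * x - c 0| ≤ |γ * x| := by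
    simpa [digitRemainder] using hc.abs_digitRemainder_le (n := 1) (d := 0) hγ
      (fun _ _ ↦ by simpa using intCast_mem_digitSet le_rfl (hk₀.trans hkM))
      (by simpa [digitRemainder] using hrep)
  have hlt : |c 0| < 1 := by
    have := abs_sub_abs_le_abs_sub (c 0) (γ * x)
    rw [abs_sub_comm] at this
    linarith
  have hk_lt : |k| < 1 := by
    rw [← hk] at hlt
    exact_mod_cast hlt
  rw [← hk, Int.abs_lt_one_iff.1 hk_lt, Int.cast_zero]

theorem IsOptimalRep.mul_le_abs_digitRemainder_two {β x : ℝ} {c : ℕ → ℝ}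
    (hc : IsOptimalRep (-β) (digitSet M) c x) (hβ : 0 < β)
    (hrep : -β * x ∈ RepSet (-β) (digitSet M)) (hx : -β * x ∈ Set.Ico 0 (1 / 2)) :
    β * (-β * x) ≤ |digitRemainder (-β) c x 2| := by
  have hc₀ : c 0 = 0 :=
    hc.first_digit_eq_zero (neg_ne_zero.2 hβ.ne') hrep ((abs_of_nonneg hx.1).trans_lt hx.2)
  have hc₁ : 0 ≤ c 1 := by
    obtain ⟨k, ⟨hk₀, -⟩, hk⟩ := hc.1.1 1
    exact hk ▸ Int.cast_nonneg hk₀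
  have hrem : digitRemainder (-β) c x 2 = -(β * (-β * x) + c 1) := by
    simp only [digitRemainder, hc₀]
    ring
  rw [hrem, abs_neg]
  exact (le_add_of_nonneg_right hc₁).trans (le_abs_self _)

theorem not_isOptimalRep_of_mem_Ioo {β x : ℝ} {c : ℕ → ℝ} (hβ : 1 < β) (hMβ : M < β)
    (hM : β ^ 2 ≤ 2 * M + 1) (hx : x ∈ Set.Ioo (-1 / (2 * β)) (-(β - M) / (2 * β ^ 2))) :
    ¬ IsOptimalRep (-β) (digitSet M) c x := by
  intro hc
  have hβ₀ : 0 < β := one_pos.trans hβ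
  have hM₁ : 1 ≤ M := by
    have : (0 : ℝ) < M := by linarith [one_lt_pow₀ hβ two_ne_zero]
    exact_mod_cast this
  have hβM : β - M ≤ 1 := by linarith [sq_nonneg (β - 1)]
  have hrep : Set.Icc (-(β * (1 / 2))) (1 / 2) ⊆ RepSet (-β) (digitSet M) :=
    Icc_neg_mul_subset_repSet hβ (by linarith) (by linarith)
  obtain ⟨y, hy⟩ : ∃ y, y = -β * x := ⟨_, rfl⟩
  have hy_lt : y < 1 / 2 := by
    have := (div_lt_iff₀ (by positivity)).1 hx.1
    linarith
  have hlt_y : β - M < 2 * (β * y) := by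
    have := (lt_div_iff₀ (by positivity)).1 hx.2
    rw [hy]
    linarith
  have hy₀ : 0 < y := pos_of_mul_pos_right (a := β) (by linarith) hβ₀.le
  have hβy : β * y < β * (1 / 2) := mul_lt_mul_of_pos_left hy_lt hβ₀
  let d : ℕ → ℝ := fun i ↦ if i = 0 then 1 else M
  have hd : ∀ i < 2, d i ∈ digitSet M := fun i _ ↦ by
    by_cases hi : i = 0
    · simpa [d, hi] using intCast_mem_digitSet zero_le_one hM₁
    · simpa [d, hi] using intCast_mem_digitSet (zero_le_one.trans hM₁) le_rfl
  have hrem_d : digitRemainder (-β) d x 2 = β - M - β * y := by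
    simp only [digitRemainder, d, ← hy, if_pos, one_ne_zero, if_false]
    ring
  have hle : β * y ≤ |β - M - β * y| := calc
    β * y = β * (-β * x) := by rw [hy]
    _ ≤ |digitRemainder (-β) c x 2| := hc.mul_le_abs_digitRemainder_two hβ₀
      (hy ▸ hrep ⟨by linarith, hy_lt.le⟩) (hy ▸ ⟨hy₀.le, hy_lt⟩)
    _ ≤ |digitRemainder (-β) d x 2| := hc.abs_digitRemainder_le (neg_ne_zero.2 hβ₀.ne') hd
      (hrem_d ▸ hrep ⟨by linarith, by linarith⟩)
    _ = |β - M - β * y| := by rw [hrem_d]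
  have hgt : |β - M - β * y| < β * y := abs_lt.2 ⟨by linarith, by linarith⟩
  exact hgt.not_ge hle

end IntegerDigits

theorem sq_le_two_mul_floor_add_one {β : ℝ}
    (hβ : β ∈ Set.Ioc (1 : ℝ) (Real.sqrt 3) ∪ Set.Ioc (2 : ℝ) (Real.sqrt 5)) :
    β ^ 2 ≤ 2 * ⌊β⌋ + 1 := by
  rcases hβ with ⟨hlt, hle⟩ | ⟨hlt, hle⟩
  · have hsq : β ^ 2 ≤ 3 := (Real.le_sqrt' (by linarith)).1 hle
    have hfloor : (1 : ℝ) ≤ ⌊β⌋ := by exact_mod_cast Int.le_floor.2 (by exact_mod_cast hlt.le)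
    linarith
  · have hsq : β ^ 2 ≤ 5 := (Real.le_sqrt' (by linarith)).1 hle
    have hfloor : (2 : ℝ) ≤ ⌊β⌋ := by exact_mod_cast Int.le_floor.2 (by exact_mod_cast hlt.le)
    linarith

/-- Case 1 of the proof of the main theorem: for `β ∈ (1,√3] ∪ (2,√5]`,
`β ∉ ℤ`, `A = {0,…,⌊β⌋}`, no `x ∈ (−1/(2β), −{β}/(2β²))` (where `{β} = β − ⌊β⌋`)
has an optimal `(−β,A)`-representation. -/
theorem no_optimal_rep_on_interval_case1
    (β : ℝ) (hβ : β ∈ Set.Ioc (1 : ℝ) (Real.sqrt 3) ∪ Set.Ioc (2 : ℝ) (Real.sqrt 5))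
    (hβZ : ∀ n : ℤ, β ≠ n) :
    ∀ x ∈ Set.Ioo (-1 / (2 * β)) (-(β - ⌊β⌋) / (2 * β ^ 2)),
      ¬ ∃ c : ℕ → ℝ, IsOptimalRep (-β) (digitSet ⌊β⌋) c x := by
  rintro x hx ⟨c, hc⟩
  have hβ₁ : 1 < β := by rcases hβ with h | h <;> linarith [h.1]
  have hfloor : ⌊β⌋ < β := (Int.floor_le β).lt_of_ne (hβZ ⌊β⌋).symm
  exact not_isOptimalRep_of_mem_Ioo hβ₁ hfloor (sq_le_two_mul_floor_add_one hβ) hx hc
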